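/- arXiv:1704.00874 — 2 statements merged into one kernel-verified Lean document; each statement's English description precedes it below -/
import Mathlib

section
/- For every finite simple graph G on n vertices and every integer L with 1 ≤ L < n, the sum of Q(γ) over all directed simple paths γ of length exactly L in G satisfies Σ_{|γ|=L} Q(γ) ≤ (8 e n / L)^{L/2 + 1}. -/
open Real

noncomputable section

namespace RumourSpreading

/-- The degree of a vertex, defined without decidability assumptions. -/
def deg {V : Type*} (G : SimpleGraph V) (u : V) : ℕ := (G.neighborSet u).ncard

/-- `Q(γ) = Π_{i=1}^{|γ|} 1 / min(deg(γ_{i-1}), deg(γ_i))` for a walk `γ`. -/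
def Q {V : Type*} (G : SimpleGraph V) {u v : V} (p : G.Walk u v) : ℝ :=
  ∏ i ∈ Finset.range p.length,
    ((min (deg G (p.getVert i)) (deg G (p.getVert (i + 1))) : ℝ))⁻¹

section aux
variable {V : Type*} [Fintype V] [DecidableEq V] (G : SimpleGraph V) [DecidableRel G.Adj]

/-- Total weight arriving at `u`. -/
def cw (u : V) : ℝ := ∑ w, if G.Adj u w then ((deg G w : ℝ))⁻¹ else 0

/-- Auxiliary kernel. -/
def ker (u v : V) : ℝ :=
  if G.Adj u v then ((deg G u : ℝ))⁻¹ + ((deg G v : ℝ))⁻¹ * (cw G u)⁻¹ else 0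

lemma deg_eq (u : V) : deg G u = G.degree u := by
  unfold deg
  rw [Set.ncard_eq_toFinset_card']
  rfl

lemma cw_nonneg (u : V) : 0 ≤ cw G u := by
  unfold cw
  exact Finset.sum_nonneg fun w _ => by split_ifs <;> positivity

lemma ker_nonneg (u v : V) : 0 ≤ ker G u v := by
  have := cw_nonneg G u
  unfold ker
  split_ifs <;> positivity

lemma row_le_one (u : V) : (∑ w, if G.Adj u w then ((deg G u : ℝ))⁻¹ else 0) ≤ 1 := by
  rw [← Finset.sum_filter, Finset.sum_const, nsmul_eq_mul]
  have : (Finset.univ.filter (fun w => G.Adj u w)).card = deg G u := by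
    rw [deg_eq, ← G.card_neighborFinset_eq_degree, G.neighborFinset_eq_filter]
  rw [this]
  exact mul_inv_le_one

lemma sum_cw_le : ∑ u, cw G u ≤ Fintype.card V := by
  unfold cw
  rw [Finset.sum_comm]
  calc _ ≤ ∑ w : V, (1 : ℝ) := Finset.sum_le_sum fun w _ => by
        have := row_le_one G w
        simpa [G.adj_comm] using this
    _ = _ := by simp

lemma sum_ker_le (u : V) : ∑ v, ker G u v ≤ 2 := by
  have h : ∑ v, ker G u v = (∑ w, if G.Adj u w then ((deg G u : ℝ))⁻¹ else 0)
      + cw G u * (cw G u)⁻¹ := by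
    conv_rhs => enter [2, 1]; unfold cw
    rw [Finset.sum_mul, ← Finset.sum_add_distrib]
    refine Finset.sum_congr rfl fun v _ => ?_
    unfold ker
    split_ifs <;> simp
  rw [h]
  have := row_le_one G u
  have : cw G u * (cw G u)⁻¹ ≤ 1 := mul_inv_le_one
  linarith

lemma deg_pos {u v : V} (h : G.Adj u v) : (0 : ℝ) < deg G u := by
  rw [deg_eq]
  exact_mod_cast (G.degree_pos_iff_exists_adj u).2 ⟨v, h⟩

lemma cw_pos {u v : V} (h : G.Adj u v) : 0 < cw G u := by
  have := deg_pos G h.symm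
  unfold cw
  refine Finset.sum_pos' (fun w _ => by split_ifs <;> positivity) ⟨v, Finset.mem_univ _, ?_⟩
  simp [h, this]

lemma le_exp_half (y : ℝ) (hy : 0 ≤ y) : y ≤ exp (y / 2) := by
  have := Real.quadratic_le_exp_of_nonneg (x := y / 2) (by linarith)
  nlinarith [sq_nonneg (y - 2)]

/-- one step -/
lemma step {u v : V} (h : G.Adj u v) {x : ℝ} (hx : 0 < x) :
    (((min (deg G u) (deg G v) : ℝ))⁻¹) ^ 2 ≤
      (x * exp ((cw G u + cw G v) / (2 * x))) * (ker G u v * ker G v u) := by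
  have hc : ∀ y z : ℝ, 0 ≤ y → 0 ≤ z → y ≤ x * exp ((y + z) / (2 * x)) := by
    intro y z hy hz
    have h1 := le_exp_half (y / x) (by positivity)
    rw [div_le_iff₀ hx] at h1
    have h2 : y / x / 2 ≤ (y + z) / (2 * x) := by
      rw [div_div, mul_comm x 2]
      gcongr
      linarith
    have h3 := Real.exp_le_exp.2 h2
    nlinarith
  have key : ∀ {u v : V}, G.Adj u v → deg G u ≤ deg G v →
      (((deg G u : ℝ))⁻¹) ^ 2 ≤
      (x * exp ((cw G u + cw G v) / (2 * x))) * (ker G u v * ker G v u) := by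
    intro u v h hd
    have hu := deg_pos G h
    have hv := deg_pos G h.symm
    have hcu := cw_pos G h
    have hcv := cw_pos G h.symm
    have h1 := hc (cw G v) (cw G u) hcv.le hcu.le
    rw [add_comm (cw G v)] at h1
    have h2 : ((deg G u : ℝ))⁻¹ ≤ ker G u v := by
      rw [ker, if_pos h]
      have : 0 ≤ ((deg G v : ℝ))⁻¹ * (cw G u)⁻¹ := by positivity
      linarith
    have h3 : ((deg G u : ℝ))⁻¹ * (cw G v)⁻¹ ≤ ker G v u := by
      rw [ker, if_pos h.symm]
      have : 0 ≤ ((deg G v : ℝ))⁻¹ := by positivity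
      linarith
    calc (((deg G u : ℝ))⁻¹) ^ 2
        = cw G v * (((deg G u : ℝ))⁻¹ * (((deg G u : ℝ))⁻¹ * (cw G v)⁻¹)) := by
          field_simp
      _ ≤ _ := by
          have := ker_nonneg G u v
          gcongr
  rcases le_total (deg G u) (deg G v) with hd | hd
  · rw [min_eq_left (by exact_mod_cast hd)]
    exact key h hd
  · rw [min_eq_right (by exact_mod_cast hd), add_comm (cw G u), mul_comm (ker G u v)]
    exact key h.symm hd

/-- Weighted walk count equals matrix power. -/
lemma walk_sum (A : Matrix V V ℝ) (hA : ∀ u v, ¬ G.Adj u v → A u v = 0) (L : ℕ) (u v : V) :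
    ∑ p ∈ G.finsetWalkLength L u v,
      ∏ i ∈ Finset.range L, A (p.getVert i) (p.getVert (i + 1)) = (A ^ L) u v := by
  induction L generalizing u v with
  | zero =>
    obtain rfl | h := eq_or_ne u v <;> simp [SimpleGraph.finsetWalkLength, *]
  | succ n ih =>
    rw [pow_succ', Matrix.mul_apply]
    simp only [SimpleGraph.finsetWalkLength]
    rw [Finset.sum_biUnion]
    · have h1 : ∀ w : G.neighborSet u,
          ∑ p ∈ (G.finsetWalkLength n w v).map
            ⟨fun p => SimpleGraph.Walk.cons w.property p, fun _ _ h => by injection h⟩,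
            ∏ i ∈ Finset.range (n + 1), A (p.getVert i) (p.getVert (i + 1))
          = A u w * (A ^ n) w v := by
        intro w
        rw [Finset.sum_map, ← ih, Finset.mul_sum]
        refine Finset.sum_congr rfl fun p _ => ?_
        rw [Finset.prod_range_succ', mul_comm]
        change A u (p.getVert 0) * _ = _
        rw [SimpleGraph.Walk.getVert_zero]
        rfl
      rw [Finset.sum_congr rfl fun w _ => h1 w]
      have h0 : ∑ w, A u w * (A ^ n) w v
          = ∑ w ∈ G.neighborFinset u, A u w * (A ^ n) w v := by
        symm
        refine Finset.sum_subset (Finset.subset_univ _) fun w _ hw => ?_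
        rw [hA u w (by simpa using hw), zero_mul]
      rw [h0]
      exact (Finset.sum_toFinset_eq_subtype (fun w => w ∈ G.neighborSet u)
        (fun w => A u w * (A ^ n) w v)).symm
    · rintro ⟨x, hx⟩ - ⟨y, hy⟩ - hxy
      rw [Function.onFun, Finset.disjoint_left]
      intro p hp hp'
      rw [Finset.mem_map] at hp hp'
      obtain ⟨q, _, rfl⟩ := hp
      obtain ⟨q', _, h⟩ := hp'
      cases h
      simp at hxy

lemma pow_sum_le (A : Matrix V V ℝ) (h0 : ∀ u v, 0 ≤ A u v) (h2 : ∀ u, ∑ v, A u v ≤ 2)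
    (L : ℕ) (u : V) : (∀ v, 0 ≤ (A ^ L) u v) ∧ ∑ v, (A ^ L) u v ≤ 2 ^ L := by
  induction L with
  | zero =>
    constructor
    · intro v
      simp only [pow_zero, Matrix.one_apply]
      split_ifs <;> simp
    · simp [Matrix.one_apply]
  | succ n ih =>
    rw [pow_succ]
    constructor
    · intro v
      rw [Matrix.mul_apply]
      exact Finset.sum_nonneg fun w _ => mul_nonneg (ih.1 w) (h0 _ _)
    · simp only [Matrix.mul_apply]
      rw [Finset.sum_comm]
      simp only [← Finset.mul_sum]
      calc _ ≤ ∑ w, (A ^ n) u w * 2 := Finset.sum_le_sum fun w _ =>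
            mul_le_mul_of_nonneg_left (h2 w) (ih.1 w)
        _ = (∑ w, (A ^ n) u w) * 2 := by rw [Finset.sum_mul]
        _ ≤ _ := by
          rw [pow_succ]
          linarith [ih.2]

lemma path_sum_le {u v : V} (p : G.Walk u v) (hp : p.IsPath) :
    ∑ i ∈ Finset.range p.length, (cw G (p.getVert i) + cw G (p.getVert (i + 1)))
      ≤ 2 * Fintype.card V := by
  have hinj := hp.getVert_injOn
  have key : ∀ f : ℕ → V, Set.InjOn f (Finset.range p.length) →
      ∑ i ∈ Finset.range p.length, cw G (f i) ≤ Fintype.card V := by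
    intro f hf
    rw [← Finset.sum_image (f := cw G) hf]
    exact (Finset.sum_le_univ_sum_of_nonneg (cw_nonneg G)).trans (sum_cw_le G)
  rw [Finset.sum_add_distrib]
  have h1 := key (fun i => p.getVert i) (by
    intro a ha b hb hab
    simp only [Finset.coe_range, Set.mem_Iio] at ha hb
    exact hinj (by simp; omega) (by simp; omega) hab)
  have h2 := key (fun i => p.getVert (i + 1)) (by
    intro a ha b hb hab
    simp only [Finset.coe_range, Set.mem_Iio] at ha hb
    have := @hinj (a + 1) (by simp; omega) (b + 1) (by simp; omega) hab
    omega)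
  linarith

lemma Q_le {u v : V} (p : G.Walk u v) (hp : p.IsPath) {x : ℝ} (hx : 0 < x) :
    Q G p ≤ √(x ^ p.length * exp (Fintype.card V / x)) *
      ((∏ i ∈ Finset.range p.length, ker G (p.getVert i) (p.getVert (i + 1)) +
       ∏ i ∈ Finset.range p.length, ker G (p.getVert (i + 1)) (p.getVert i)) / 2) := by
  set a := ∏ i ∈ Finset.range p.length, ker G (p.getVert i) (p.getVert (i + 1)) with ha
  set b := ∏ i ∈ Finset.range p.length, ker G (p.getVert (i + 1)) (p.getVert i) with hb
  have ha0 : 0 ≤ a := Finset.prod_nonneg fun _ _ => ker_nonneg G _ _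
  have hb0 : 0 ≤ b := Finset.prod_nonneg fun _ _ => ker_nonneg G _ _
  have h1 : Q G p ^ 2 ≤ (x ^ p.length * exp (Fintype.card V / x)) * (a * b) := by
    have : Q G p ^ 2 ≤ ∏ i ∈ Finset.range p.length,
        ((x * exp ((cw G (p.getVert i) + cw G (p.getVert (i + 1))) / (2 * x))) *
        (ker G (p.getVert i) (p.getVert (i + 1)) * ker G (p.getVert (i + 1)) (p.getVert i))) := by
      unfold Q
      rw [← Finset.prod_pow]
      refine Finset.prod_le_prod (fun _ _ => sq_nonneg _) fun i hi => ?_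
      exact step G (p.adj_getVert_succ (Finset.mem_range.1 hi)) hx
    refine this.trans ?_
    rw [Finset.prod_mul_distrib, Finset.prod_mul_distrib, Finset.prod_mul_distrib,
      Finset.prod_const, Finset.card_range, ← Real.exp_sum, ← Finset.sum_div]
    have h3 := path_sum_le G p hp
    have h4 : (∑ i ∈ Finset.range p.length, (cw G (p.getVert i) + cw G (p.getVert (i + 1))))
        / (2 * x) ≤ Fintype.card V / x := by
      rw [div_le_div_iff₀ (by positivity) hx]
      nlinarith
    gcongr
  have h2 : (0 : ℝ) ≤ x ^ p.length * exp (Fintype.card V / x) := by positivity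
  refine le_of_sq_le_sq ?_ (by positivity)
  rw [mul_pow, Real.sq_sqrt h2]
  refine h1.trans (mul_le_mul_of_nonneg_left ?_ h2)
  nlinarith [sq_nonneg (a - b)]

end aux

theorem sum_Q_paths_le {V : Type*} [Fintype V] [DecidableEq V]
    (G : SimpleGraph V) [DecidableRel G.Adj] (L : ℕ) (hL1 : 1 ≤ L)
    (hLn : L < Fintype.card V) :
    ∑ u : V, ∑ v : V,
        ∑ p ∈ (G.finsetWalkLength L u v).filter (fun p => p.IsPath), Q G p
      ≤ (8 * Real.exp 1 * (Fintype.card V : ℝ) / L) ^ ((L : ℝ) / 2 + 1) := by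
  have hL0 : (0 : ℝ) < L := by exact_mod_cast hL1
  have hn0 : (0 : ℝ) < Fintype.card V := by exact_mod_cast (by omega : 0 < Fintype.card V)
  obtain ⟨x, hxd⟩ : ∃ x : ℝ, x = (Fintype.card V : ℝ) / L := ⟨_, rfl⟩
  have hx : 0 < x := by rw [hxd]; positivity
  have hnx : (Fintype.card V : ℝ) = L * x := by rw [hxd]; field_simp
  have hnx' : (Fintype.card V : ℝ) / x = L := by rw [hnx]; field_simp
  let A : Matrix V V ℝ := Matrix.of (ker G)
  have hA0 : ∀ u v, 0 ≤ A u v := ker_nonneg G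
  have hpow := pow_sum_le A hA0 (sum_ker_le G) L
  have hB : √(x ^ L * exp L) = x ^ ((L : ℝ) / 2) * exp ((L : ℝ) / 2) := by
    rw [Real.sqrt_eq_rpow, Real.mul_rpow (by positivity) (by positivity), ← Real.rpow_natCast,
      ← Real.rpow_mul hx.le, ← Real.exp_mul]
    ring_nf
  have htot : ∑ u, ∑ v, (A ^ L) u v ≤ L * x * 2 ^ L := by
    calc _ ≤ ∑ u : V, (2 : ℝ) ^ L := Finset.sum_le_sum fun u _ => (hpow u).2
      _ = _ := by rw [Finset.sum_const, nsmul_eq_mul, Finset.card_univ, hnx]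
  have hmain : ∑ u : V, ∑ v : V,
        ∑ p ∈ (G.finsetWalkLength L u v).filter (fun p => p.IsPath), Q G p
      ≤ ∑ u : V, ∑ v : V, √(x ^ L * exp L) * (((A ^ L) u v + (A ^ L) v u) / 2) := by
    refine Finset.sum_le_sum fun u _ => Finset.sum_le_sum fun v _ => ?_
    have e1 := walk_sum G A (fun u v h => by simp [A, ker, h]) L u v
    have e2 := walk_sum G A.transpose
      (fun u v h => by simp [A, ker, G.adj_comm v u, h]) L u v
    rw [← Matrix.transpose_pow, Matrix.transpose_apply] at e2
    rw [← e1, ← e2, ← Finset.sum_add_distrib, Finset.sum_div, Finset.mul_sum]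
    rw [Finset.sum_filter]
    refine Finset.sum_le_sum fun p hp => ?_
    rw [SimpleGraph.mem_finsetWalkLength_iff] at hp
    split_ifs with hpath
    · have := Q_le G p hpath hx
      rw [hnx', hp] at this
      exact this
    · have h1 : 0 ≤ ∏ i ∈ Finset.range L, A (p.getVert i) (p.getVert (i + 1)) :=
        Finset.prod_nonneg fun _ _ => hA0 _ _
      have h2 : 0 ≤ ∏ i ∈ Finset.range L, A.transpose (p.getVert i) (p.getVert (i + 1)) :=
        Finset.prod_nonneg fun _ _ => hA0 _ _
      exact mul_nonneg (Real.sqrt_nonneg _) (div_nonneg (add_nonneg h1 h2) (by norm_num))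
  refine hmain.trans ?_
  have hcomm : ∑ u, ∑ v, (A ^ L) v u = ∑ u, ∑ v, (A ^ L) u v := Finset.sum_comm
  have hsum : ∑ u : V, ∑ v : V, √(x ^ L * exp L) * (((A ^ L) u v + (A ^ L) v u) / 2)
      = √(x ^ L * exp L) * ∑ u, ∑ v, (A ^ L) u v := by
    simp only [← Finset.mul_sum, ← Finset.sum_div, Finset.sum_add_distrib]
    rw [hcomm, add_self_div_two]
  rw [hsum, hB]
  have hR : (8 * Real.exp 1 * (Fintype.card V : ℝ) / L) ^ ((L : ℝ) / 2 + 1)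
      = (x ^ ((L : ℝ) / 2) * exp ((L : ℝ) / 2)) * (x * (8 * exp 1 * 8 ^ ((L : ℝ) / 2))) := by
    have : 8 * Real.exp 1 * (Fintype.card V : ℝ) / L = 8 * exp 1 * x := by rw [hxd]; ring
    rw [this, Real.rpow_add (by positivity), Real.rpow_one,
      Real.mul_rpow (by positivity) hx.le, Real.mul_rpow (by positivity) (by positivity),
      Real.exp_one_rpow]
    ring
  rw [hR]
  refine mul_le_mul_of_nonneg_left (htot.trans ?_) (by positivity)
  have h8 : (8 : ℝ) ^ ((L : ℝ) / 2) = 2 ^ L * 2 ^ ((L : ℝ) / 2) := by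
    rw [← Real.rpow_natCast 2 L, ← Real.rpow_add (by norm_num),
      show (8 : ℝ) = 2 ^ (3 : ℝ) by norm_num, ← Real.rpow_mul (by norm_num)]
    ring_nf
  have hlow : (L : ℝ) ≤ 8 * exp 1 * 2 ^ ((L : ℝ) / 2) := by
    rw [Real.rpow_def_of_pos (by norm_num)]
    have h1 := Real.add_one_le_exp (log 2 * ((L : ℝ) / 2))
    have h2 := Real.log_two_gt_d9
    have h3 := Real.add_one_le_exp (1 : ℝ)
    have h4 : (L : ℝ) / 4 ≤ exp (log 2 * ((L : ℝ) / 2)) := by nlinarith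
    nlinarith
  rw [h8]
  calc (L : ℝ) * x * 2 ^ L ≤ (8 * exp 1 * 2 ^ ((L : ℝ) / 2)) * x * 2 ^ L := by gcongr
    _ = _ := by ring

end RumourSpreading
end
end

section
/- Let G be a finite simple graph, let x be a vertex of G, and let ℓ⁻, ℓ⁺ ≥ 0 be integers with ℓ := ℓ⁻ + ℓ⁺ ≥ 1. Then the sum of Q(σ) over all directed simple paths σ = (v_0, …, v_ℓ) in G of length ℓ such that v_{ℓ⁻} = x, deg(v_{i-1}) > deg(v_i) for all 1 ≤ i ≤ ℓ⁻, and deg(v_i) ≤ deg(v_{i+1}) for all ℓ⁻ ≤ i ≤ ℓ−1, is at most 1. -/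
open Real

noncomputable section

namespace RumourSpreading

lemma Q_nonneg' {V : Type*} (G : SimpleGraph V) {u v : V} (p : G.Walk u v) : 0 ≤ Q G p := by
  unfold Q
  exact Finset.prod_nonneg fun i _ => by positivity

lemma Q_cons {V : Type*} (G : SimpleGraph V) {u w v : V} (h : G.Adj u w) (p : G.Walk w v) :
    Q G (SimpleGraph.Walk.cons h p) = (min (deg G u) (deg G w) : ℝ)⁻¹ * Q G p := by
  unfold Q
  rw [SimpleGraph.Walk.length_cons, Finset.prod_range_succ']
  simp [mul_comm]

lemma sum_walks_succ {V : Type*} [Fintype V] [DecidableEq V]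
    (G : SimpleGraph V) [DecidableRel G.Adj] (n : ℕ) (u v : V) (f : G.Walk u v → ℝ) :
    ∑ p ∈ G.finsetWalkLength (n + 1) u v, f p =
      ∑ w : G.neighborSet u, ∑ p ∈ G.finsetWalkLength n w v, f (SimpleGraph.Walk.cons w.2 p) := by
  rw [SimpleGraph.finsetWalkLength, Finset.sum_biUnion]
  · refine Finset.sum_congr rfl fun w _ => ?_
    rw [Finset.sum_map]
    rfl
  · intro a _ b _ hab
    rw [Function.onFun, Finset.disjoint_left]
    intro p hp hq
    simp only [Finset.mem_map] at hp hq
    obtain ⟨q, -, rfl⟩ := hp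
    obtain ⟨r, -, hr⟩ := hq
    have hr' : SimpleGraph.Walk.cons b.2 r = SimpleGraph.Walk.cons a.2 q := hr
    have this : (b : V) = a := by
      injection hr'
    exact hab (Subtype.ext this.symm)

lemma card_nbr {V : Type*} [Fintype V] (G : SimpleGraph V) [DecidableRel G.Adj] (u : V) :
    ((Fintype.card (G.neighborSet u) : ℕ) : ℝ) * (deg G u : ℝ)⁻¹ ≤ 1 := by
  rw [deg, ← Nat.card_coe_set_eq, Nat.card_eq_fintype_card]
  exact mul_inv_le_one

/-- degree conditions, without the simple path condition -/
def Cond {V : Type*} (G : SimpleGraph V) (n lm : ℕ) (x : V) {u v : V} (p : G.Walk u v) : Prop :=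
  p.getVert lm = x ∧ (∀ i < lm, deg G (p.getVert (i + 1)) < deg G (p.getVert i)) ∧
    (∀ i, lm ≤ i → i < n → deg G (p.getVert i) ≤ deg G (p.getVert (i + 1)))

open Classical in
def W {V : Type*} (G : SimpleGraph V) (n lm : ℕ) (x : V) {u v : V} (p : G.Walk u v) : ℝ :=
  if Cond G n lm x p then Q G p else 0

lemma W_nonneg {V : Type*} (G : SimpleGraph V) (n lm : ℕ) (x : V) {u v : V} (p : G.Walk u v) :
    0 ≤ W G n lm x p := by
  unfold W
  split_ifs
  · exact Q_nonneg' G p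
  · exact le_rfl

lemma W_zero_cons {V : Type*} (G : SimpleGraph V) (n : ℕ) {u w v : V} (h : G.Adj u w)
    (p : G.Walk w v) :
    W G (n + 1) 0 u (SimpleGraph.Walk.cons h p) ≤ (deg G u : ℝ)⁻¹ * W G n 0 w p := by
  unfold W
  split_ifs with h1 h2 h2
  · rw [Q_cons, min_eq_left]
    have := h1.2.2 0 le_rfl (Nat.succ_pos _)
    simpa using this
  · exact absurd ⟨by simp, by simp, fun i _ hi => by
      simpa using h1.2.2 (i + 1) (Nat.zero_le _) (by omega)⟩ h2
  · have := Q_nonneg' G p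
    positivity
  · simp

lemma W_succ_cons {V : Type*} (G : SimpleGraph V) (n lm : ℕ) (x : V) {u w v : V} (h : G.Adj u w)
    (p : G.Walk w v) :
    W G (n + 1) (lm + 1) x (SimpleGraph.Walk.cons h p) ≤ (deg G w : ℝ)⁻¹ * W G n lm x p := by
  unfold W
  split_ifs with h1 h2 h2
  · rw [Q_cons, min_eq_right]
    have := (h1.2.1 0 (Nat.succ_pos _)).le
    simpa using this
  · exact absurd ⟨by simpa using h1.1, fun i hi => by
      simpa using h1.2.1 (i + 1) (by omega), fun i hi hi' => by
      simpa using h1.2.2 (i + 1) (by omega) (by omega)⟩ h2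
  · have := Q_nonneg' G p
    positivity
  · simp

lemma sum_zero_from {V : Type*} [Fintype V] [DecidableEq V]
    (G : SimpleGraph V) [DecidableRel G.Adj] (n : ℕ) (x : V) :
    ∑ v : V, ∑ p ∈ G.finsetWalkLength n x v, W G n 0 x p ≤ 1 := by
  induction n generalizing x with
  | zero =>
    rw [Finset.sum_eq_single x]
    · simp [SimpleGraph.finsetWalkLength, W, Q]
      split_ifs <;> norm_num
    · intro b _ hb
      simp [SimpleGraph.finsetWalkLength, Ne.symm hb]
    · simp
  | succ n ih =>
    simp_rw [sum_walks_succ]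
    rw [Finset.sum_comm]
    calc _ ≤ ∑ w : G.neighborSet x, (deg G x : ℝ)⁻¹ * 1 := by
          refine Finset.sum_le_sum fun w _ => ?_
          refine le_trans ?_ (mul_le_mul_of_nonneg_left (ih w) (by positivity))
          simp_rw [Finset.mul_sum]
          exact Finset.sum_le_sum fun v _ => Finset.sum_le_sum fun p _ => W_zero_cons G n w.2 p
      _ ≤ 1 := by
          simpa using card_nbr G x

lemma sum_all {V : Type*} [Fintype V] [DecidableEq V]
    (G : SimpleGraph V) [DecidableRel G.Adj] (lm n : ℕ) (hn : lm ≤ n) (x : V) :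
    ∑ u : V, ∑ v : V, ∑ p ∈ G.finsetWalkLength n u v, W G n lm x p ≤ 1 := by
  induction lm generalizing n with
  | zero =>
    rw [Finset.sum_eq_single x]
    · exact sum_zero_from G n x
    · intro b _ hb
      refine Finset.sum_eq_zero fun v _ => Finset.sum_eq_zero fun p _ => ?_
      rw [W, if_neg]
      rintro ⟨h, -⟩
      exact hb (by simpa using h)
    · simp
  | succ lm ih =>
    obtain ⟨n, rfl⟩ : ∃ m, n = m + 1 := ⟨n - 1, by omega⟩
    refine le_trans ?_ (ih n (by omega))
    simp_rw [sum_walks_succ]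
    calc _ ≤ ∑ u : V, ∑ v : V, ∑ w : G.neighborSet u, ∑ p ∈ G.finsetWalkLength n w v,
              (deg G w : ℝ)⁻¹ * W G n lm x p :=
          Finset.sum_le_sum fun u _ => Finset.sum_le_sum fun v _ => Finset.sum_le_sum fun w _ =>
            Finset.sum_le_sum fun p _ => W_succ_cons G n lm x w.2 p
      _ = ∑ u : V, ∑ w : V, if G.Adj u w then (deg G w : ℝ)⁻¹ *
            ∑ v : V, ∑ p ∈ G.finsetWalkLength n w v, W G n lm x p else 0 := by
          refine Finset.sum_congr rfl fun u _ => ?_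
          rw [Finset.sum_comm, ← Finset.sum_filter]
          simp_rw [Finset.mul_sum]
          exact (Finset.sum_subtype _ (by simp) (fun w : V => ∑ v : V,
            ∑ p ∈ G.finsetWalkLength n w v, (deg G w : ℝ)⁻¹ * W G n lm x p)).symm
      _ ≤ _ := by
          rw [Finset.sum_comm]
          refine Finset.sum_le_sum fun w _ => ?_
          have h0 : 0 ≤ ∑ v : V, ∑ p ∈ G.finsetWalkLength n w v, W G n lm x p :=
            Finset.sum_nonneg fun v _ => Finset.sum_nonneg fun p _ => W_nonneg G n lm x p
          have hc : ((Finset.univ.filter fun u => G.Adj u w).card : ℝ)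
              = Fintype.card (G.neighborSet w) := by
            rw [Fintype.card_subtype]
            congr 2
            ext u
            simp [G.adj_comm]
          rw [← Finset.sum_filter, Finset.sum_const, nsmul_eq_mul, ← mul_assoc, hc]
          exact mul_le_of_le_one_left h0 (card_nbr G w)

/-- The sum of `Q` over all directed simple paths of length `ℓ = ℓ⁻ + ℓ⁺` whose `ℓ⁻`-th
vertex is `x`, whose degrees strictly decrease up to position `ℓ⁻` and weakly increase
afterwards, is at most `1`. -/
theorem sum_Q_segments_le_one {V : Type*} [Fintype V] [DecidableEq V]
    (G : SimpleGraph V) [DecidableRel G.Adj] (x : V) (lm lp : ℕ) (h : 1 ≤ lm + lp) :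
    ∑ u : V, ∑ v : V,
        ∑ p ∈ (G.finsetWalkLength (lm + lp) u v).filter (fun p =>
            p.IsPath ∧ p.getVert lm = x ∧
            (∀ i ∈ Finset.Icc 1 lm, deg G (p.getVert i) < deg G (p.getVert (i - 1))) ∧
            (∀ i ∈ Finset.Ico lm (lm + lp), deg G (p.getVert i) ≤ deg G (p.getVert (i + 1)))),
          Q G p
      ≤ 1 := by
  refine le_trans ?_ (sum_all G lm (lm + lp) (Nat.le_add_right _ _) x)
  refine Finset.sum_le_sum fun u _ => Finset.sum_le_sum fun v _ => ?_
  rw [Finset.sum_filter]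
  refine Finset.sum_le_sum fun p _ => ?_
  split_ifs with hp
  · obtain ⟨-, h1, h2, h3⟩ := hp
    rw [W, if_pos]
    refine ⟨h1, fun i hi => ?_, fun i hi hi' => h3 i (by simp; omega)⟩
    simpa using h2 (i + 1) (by simp; omega)
  · exact W_nonneg _ _ _ _ _

end RumourSpreading
end
end
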